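/- Let p, q > 0 and set m* = (p/(p+q), q/(p+q)) ∈ ℝ². Define u(a,θ) = −(a₁−θ₁)² − (a₂−θ₂)² for a, θ ∈ ℝ², and let A = {(0,0), (1,1), m*} ⊆ ℝ². Then the following are equivalent: (i) for every a ∈ A, u(m*, (1,0)) ≥ u(a, (1,0)), u(m*, (0,1)) ≥ u(a, (0,1)), u((0,0), (0,0)) ≥ u(a, (0,0)), and u((1,1), (1,1)) ≥ u(a, (1,1)); (ii) √2 − 1 ≤ p/q ≤ 1/(√2 − 1). -/

import Mathlib

/-!
Seen from the state `(1, 0)`, the actions `(0, 0)` and `(1, 1)` are both at squared distance `1`,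
while an action `(x, y)` with `x + y = 1` is at squared distance `2 * y ^ 2`. Hence `m*` is best
there iff `√2 ≤ 1 / y = p / q + 1`; the state `(0, 1)` gives the same bound with `p` and `q`
exchanged, and in the two remaining states the prescribed action is the state itself.
-/

section QuadraticPayoff

variable {K : Type*} [CommRing K]

/-- The payoff of the sender from the action `a` in the state `θ`: minus the squared Euclidean
distance, written in coordinates because the metric on `K × K` is the sup metric. -/
def quadraticPayoff (a θ : K × K) : K :=
  -(a.1 - θ.1) ^ 2 - (a.2 - θ.2) ^ 2

theorem quadraticPayoff_swap (a θ : K × K) :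
    quadraticPayoff a.swap θ.swap = quadraticPayoff a θ := by
  simp only [quadraticPayoff, Prod.fst_swap, Prod.snd_swap]
  ring

theorem quadraticPayoff_self (θ : K × K) : quadraticPayoff θ θ = 0 := by
  simp [quadraticPayoff]

theorem quadraticPayoff_one_zero_of_add_eq_one {x y : K} (hxy : x + y = 1) :
    quadraticPayoff (x, y) (1, 0) = -(2 * y ^ 2) := by
  rw [quadraticPayoff, eq_sub_of_add_eq hxy]
  ring

variable [LinearOrder K] [IsStrictOrderedRing K]

theorem quadraticPayoff_nonpos (a θ : K × K) : quadraticPayoff a θ ≤ 0 := by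
  rw [quadraticPayoff]
  linarith [sq_nonneg (a.1 - θ.1), sq_nonneg (a.2 - θ.2)]

theorem isMaxOn_quadraticPayoff_self (A : Set (K × K)) (θ : K × K) :
    IsMaxOn (quadraticPayoff · θ) A θ :=
  isMaxOn_iff.2 fun a _ ↦ (quadraticPayoff_nonpos a θ).trans_eq (quadraticPayoff_self θ).symm

theorem isMaxOn_quadraticPayoff_one_zero_iff {x y : K} (hxy : x + y = 1) :
    IsMaxOn (quadraticPayoff · (1, 0)) {(0, 0), (1, 1), (x, y)} (x, y) ↔ 2 * y ^ 2 ≤ 1 := by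
  have payoff_zero : quadraticPayoff ((0, 0) : K × K) (1, 0) = -1 := by simp [quadraticPayoff]
  have payoff_one : quadraticPayoff ((1, 1) : K × K) (1, 0) = -1 := by simp [quadraticPayoff]
  simp only [isMaxOn_iff, Set.mem_insert_iff, Set.mem_singleton_iff, forall_eq_or_imp, forall_eq,
    le_refl, and_true, and_self, payoff_zero, payoff_one,
    quadraticPayoff_one_zero_of_add_eq_one hxy, neg_le_neg_iff]

theorem isMaxOn_quadraticPayoff_zero_one_iff {x y : K} (hxy : x + y = 1) :
    IsMaxOn (quadraticPayoff · (0, 1)) {(0, 0), (1, 1), (x, y)} (x, y) ↔ 2 * x ^ 2 ≤ 1 := by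
  rw [← isMaxOn_quadraticPayoff_one_zero_iff ((add_comm y x).trans hxy)]
  simp only [isMaxOn_iff, Set.mem_insert_iff, Set.mem_singleton_iff, forall_eq_or_imp, forall_eq,
    ← quadraticPayoff_swap _ ((0, 1) : K × K), Prod.swap_prod_mk]

end QuadraticPayoff

theorem mul_sq_le_one_iff_sqrt_le_inv (c : ℝ) {t : ℝ} (ht : 0 < t) :
    c * t ^ 2 ≤ 1 ↔ √c ≤ t⁻¹ := by
  rw [Real.sqrt_le_left (inv_nonneg.2 ht.le), inv_pow, ← one_div, le_div_iff₀ (pow_pos ht 2)]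

theorem mul_div_add_sq_le_one_iff (c : ℝ) {p q : ℝ} (hq : 0 < q) (hpq : 0 < p + q) :
    c * (q / (p + q)) ^ 2 ≤ 1 ↔ √c - 1 ≤ p / q := by
  rw [mul_sq_le_one_iff_sqrt_le_inv c (div_pos hq hpq), inv_div, add_div, div_self hq.ne',
    sub_le_iff_le_add]

/-- Remark 2: the diagonal score on `{0,1}²` pooling `(1,0)` and `(0,1)`
(with posterior mean `m* = (p/(p+q), q/(p+q))`, `p = f(1,0)`, `q = f(0,1)`) is incentive
compatible iff `√2 − 1 ≤ p/q ≤ 1/(√2 − 1)`. -/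
theorem stmt_12 (p q : ℝ) (hp : 0 < p) (hq : 0 < q)
    (mstar : ℝ × ℝ) (hm : mstar = (p / (p + q), q / (p + q)))
    (u : (ℝ × ℝ) → (ℝ × ℝ) → ℝ)
    (hu : ∀ a θ : ℝ × ℝ, u a θ = -(a.1 - θ.1) ^ 2 - (a.2 - θ.2) ^ 2)
    (A : Set (ℝ × ℝ)) (hA : A = {((0 : ℝ), (0 : ℝ)), ((1 : ℝ), (1 : ℝ)), mstar}) :
    (∀ a ∈ A,
        u a ((1 : ℝ), (0 : ℝ)) ≤ u mstar ((1 : ℝ), (0 : ℝ)) ∧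
        u a ((0 : ℝ), (1 : ℝ)) ≤ u mstar ((0 : ℝ), (1 : ℝ)) ∧
        u a ((0 : ℝ), (0 : ℝ)) ≤ u ((0 : ℝ), (0 : ℝ)) ((0 : ℝ), (0 : ℝ)) ∧
        u a ((1 : ℝ), (1 : ℝ)) ≤ u ((1 : ℝ), (1 : ℝ)) ((1 : ℝ), (1 : ℝ))) ↔
      (Real.sqrt 2 - 1 ≤ p / q ∧ p / q ≤ 1 / (Real.sqrt 2 - 1)) := by
  obtain rfl : u = quadraticPayoff := funext₂ hu
  subst hA hm
  have hpq : 0 < p + q := add_pos hp hq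
  have mean_add : p / (p + q) + q / (p + q) = 1 := by rw [← add_div, div_self hpq.ne']
  have best_one_zero : 2 * (q / (p + q)) ^ 2 ≤ 1 ↔ √2 - 1 ≤ p / q :=
    mul_div_add_sq_le_one_iff 2 hq hpq
  have best_zero_one : 2 * (p / (p + q)) ^ 2 ≤ 1 ↔ p / q ≤ 1 / (√2 - 1) := by
    rw [le_one_div (div_pos hp hq) (sub_pos.2 Real.one_lt_sqrt_two), one_div_div, add_comm p q]
    exact mul_div_add_sq_le_one_iff 2 hp (add_pos hq hp)
  rw [← best_one_zero, ← best_zero_one]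
  simp only [forall₂_and, ← isMaxOn_iff, isMaxOn_quadraticPayoff_self, and_true,
    isMaxOn_quadraticPayoff_one_zero_iff mean_add, isMaxOn_quadraticPayoff_zero_one_iff mean_add]
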